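/- arXiv:2212.08721 — 2 statements merged into one kernel-verified Lean document; each statement's English description precedes it below -/
import Mathlib

section
/- Let 𝒞 be a set system on a finite nonempty set V satisfying axiom (L1). Then 𝒞 is a weak hierarchy. -/
namespace TransitPaper

variable {V : Type*}

/-- Transit function axioms (t1), (t2), (t3). -/
def IsTransit (R : V → V → Set V) : Prop :=
  (∀ u v, u ∈ R u v) ∧ (∀ u v, R u v = R v u) ∧ (∀ u : V, R u u = {u})

/-- Monotonicity axiom (m). -/
def IsMonotone (R : V → V → Set V) : Prop :=
  ∀ u v p q, p ∈ R u v → q ∈ R u v → R p q ⊆ R u v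

/-- Two sets overlap: A ∩ B, A \ B, B \ A all nonempty. -/
def Ovl (A B : Set V) : Prop :=
  (A ∩ B).Nonempty ∧ (A \ B).Nonempty ∧ (B \ A).Nonempty

/-- The system of transit sets 𝒞_R. -/
def transitSets (R : V → V → Set V) : Set (Set V) :=
  {S | ∃ x y, S = R x y}

/-- S is an interval with respect to the order `lt`. -/
def IsIntervalWrt (lt : V → V → Prop) (S : Set V) : Prop :=
  ∀ x ∈ S, ∀ y ∈ S, ∀ w, lt x w → lt w y → w ∈ S

/-- R is pyramidal: monotone and there is a total order making all transit sets intervals. -/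
def IsPyramidal (R : V → V → Set V) : Prop :=
  IsMonotone R ∧ ∃ lt : V → V → Prop, IsStrictTotalOrder V lt ∧
    ∀ u v, IsIntervalWrt lt (R u v)

def AxUC (R : V → V → Set V) : Prop :=
  ∀ x y u v : V, (R x y ∩ R u v).Nonempty →
    ∃ p ∈ R x y ∪ R u v, ∃ q ∈ R x y ∪ R u v, R x y ∪ R u v = R p q

def AxU (R : V → V → Set V) : Prop :=
  ∀ u v z : V, z ∈ R u v → R u v = R u z ∪ R z v

def AxW (R : V → V → Set V) : Prop :=
  ∀ x y z : V, z ∈ R x y ∨ y ∈ R x z ∨ x ∈ R y z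

def AxWP (R : V → V → Set V) : Prop :=
  ∀ u v x y p q : V, (R u v ∩ R x y).Nonempty → (R u v ∩ R p q).Nonempty →
    (R x y ∩ R p q).Nonempty →
    R p q ⊆ R u v ∪ R x y ∨ R u v ⊆ R p q ∪ R x y ∨ R x y ⊆ R p q ∪ R u v

def AxI (R : V → V → Set V) : Prop :=
  ∀ x y u v p q : V, (R x y ∩ R u v).Nonempty → R x y ∩ R u v ⊆ R p q →
    (R p q \ (R x y ∪ R u v)).Nonempty → R x y ⊆ R p q ∨ R u v ⊆ R p q

def AxO' (R : V → V → Set V) : Prop :=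
  ∀ u v : V, ∀ z ∈ R u v, ∃ p ∈ R u v, ∃ q ∈ R u v, R p z ∪ R z q = R u v

def AxL1 (R : V → V → Set V) : Prop :=
  ∀ x y p q u v : V, Ovl (R x y) (R p q) → Ovl (R p q) (R u v) →
    R x y ⊆ R u v ∨ R u v ⊆ R x y ∨
      (R x y ∩ R u v ⊆ R p q ∧ R p q ⊆ R x y ∪ R u v)

def AxL2 (R : V → V → Set V) : Prop :=
  ∀ x y p q u v : V, Ovl (R x y) (R p q) → Ovl (R p q) (R u v) →
    R x y ∩ R u v = ∅ →
    ∃ s ∈ R x y \ R p q, ∃ t ∈ R u v \ R p q,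
      R x y ∪ R p q ∪ R u v = R s t

def AxN3O (R : V → V → Set V) : Prop :=
  ∀ x y p q u v : V, Ovl (R x y) (R p q) → Ovl (R p q) (R u v) →
    R x y ⊆ R u v ∨ R u v ⊆ R x y ∨ R x y ∩ R u v = ∅

def AxU3 (R : V → V → Set V) : Prop :=
  ∀ x y : V, ¬ R x y ⊆ {x, y} →
    ∃ z ∈ R x y, z ≠ x ∧ z ≠ y ∧ R x z ∪ R z y = R x y

def AxB3 (R : V → V → Set V) : Prop :=
  ∀ u v x y : V, x ∈ R u v → y ∈ R u x → x ∈ R y v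

def AxB4 (R : V → V → Set V) : Prop :=
  ∀ u v x : V, x ∈ R u v → R u x ∩ R x v = {x}

def AxTB (R : V → V → Set V) : Prop :=
  ∀ W : Finset V, 3 ≤ W.card →
    ∃ x ∈ W, ∀ u ∈ W, ∀ v ∈ W, R x u ⊆ R x v ∨ R x v ⊆ R x u

def AxHC (R : V → V → Set V) : Prop :=
  ∀ W : Finset V, 3 ≤ W.card →
    ∃ x ∈ W, ∃ y ∈ W, x ≠ y ∧
      ∀ u ∈ W, ∀ v ∈ W,
        (R x u ⊆ R x v ∨ R x v ⊆ R x u) ∧ (R y u ⊆ R y v ∨ R y v ⊆ R y u)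

def AxTB' (R : V → V → Set V) : Prop :=
  ∀ n : ℕ, 3 ≤ n → ∀ v : ZMod n → V,
    (∀ k : ZMod n, v (k - 1) ∉ R (v k) (v (k + 1)) ∧
      v (k + 1) ∉ R (v (k - 1)) (v k)) →
    ∃ j i : ZMod n, i ≠ j ∧ i ≠ j - 1 ∧ v j ∈ R (v i) (v (i + 1))

def AxP2 (R : V → V → Set V) : Prop :=
  ∀ x y u v p q s t : V,
    Ovl (R x y) (R s t) → Ovl (R u v) (R s t) → Ovl (R p q) (R s t) →
    R x y ⊆ R u v ∪ R p q ∪ R s t ∨ R u v ⊆ R x y ∪ R p q ∪ R s t ∨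
      R p q ⊆ R x y ∪ R u v ∪ R s t

def AxP3 (R : V → V → Set V) : Prop :=
  ∀ x y u v p q s t : V,
    Ovl (R x y) (R u v) → Ovl (R x y) (R p q) → Ovl (R x y) (R s t) →
    R p q ⊆ R u v → R s t ⊆ R u v → (R p q ∩ R s t).Nonempty

def AxP4 (R : V → V → Set V) : Prop :=
  ∀ n : ℕ, 3 ≤ n → ∀ (u v y : V) (x : ℕ → V),
    (∀ i j : ℕ, 1 ≤ i → i ≤ n → 1 ≤ j → j + 1 ≤ n → j ≠ i - 1 → j ≠ i →
      x i ∉ R (x j) (x (j + 1))) →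
    (R u v ∩ R (x 1) (x 2)).Nonempty →
    (R u v ∩ R (x (n - 1)) (x n)).Nonempty →
    (∀ i : ℕ, 1 ≤ i → i + 1 ≤ n → y ∈ R u v \ R (x i) (x (i + 1))) →
    R (x 1) (x 2) ⊆ R u v ∨ R (x (n - 1)) (x n) ⊆ R u v

/-- A weak β-cycle in a set system 𝒞. -/
def HasWeakBetaCycle (𝒞 : Set (Set V)) : Prop :=
  ∃ n : ℕ, 3 ≤ n ∧ ∃ (C : ZMod n → Set V) (x : ZMod n → V),
    (∀ i, C i ∈ 𝒞) ∧ (∀ i, x i ∈ C i ∧ x i ∈ C (i + 1)) ∧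
    (∀ i k : ZMod n, k ≠ i → k ≠ i + 1 → x i ∉ C k)

def TotallyBalanced (𝒞 : Set (Set V)) : Prop := ¬ HasWeakBetaCycle 𝒞

/-- A pure cycle: a weak β-cycle with nonconsecutive sets disjoint. -/
def HasPureCycle (𝒞 : Set (Set V)) : Prop :=
  ∃ n : ℕ, 3 ≤ n ∧ ∃ (C : ZMod n → Set V) (x : ZMod n → V),
    (∀ i, C i ∈ 𝒞) ∧ (∀ i, x i ∈ C i ∧ x i ∈ C (i + 1)) ∧
    (∀ i k : ZMod n, k ≠ i → k ≠ i + 1 → x i ∉ C k) ∧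
    (∀ i j : ZMod n, j ≠ i - 1 → j ≠ i → j ≠ i + 1 → C i ∩ C j = ∅)

def HasGammaTriangle (𝒞 : Set (Set V)) : Prop :=
  ∃ C₁ C₂ C₃ : Set V, C₁ ∈ 𝒞 ∧ C₂ ∈ 𝒞 ∧ C₃ ∈ 𝒞 ∧
    (C₁ ∩ C₂).Nonempty ∧ (C₁ ∩ C₃).Nonempty ∧ (C₂ ∩ C₃).Nonempty ∧
    ∃ u ∈ C₃, ∃ w ∈ C₃, u ∈ C₁ \ C₂ ∧ w ∈ C₂ \ C₁

def GammaAcyclic (𝒞 : Set (Set V)) : Prop :=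
  ¬ HasPureCycle 𝒞 ∧ ¬ HasGammaTriangle 𝒞

def IsHierarchy (𝒞 : Set (Set V)) : Prop :=
  Set.univ ∈ 𝒞 ∧ (∀ x : V, {x} ∈ 𝒞) ∧
    ∀ A ∈ 𝒞, ∀ B ∈ 𝒞, A ∩ B = A ∨ A ∩ B = B ∨ A ∩ B = ∅

def WeakHierarchy (𝒞 : Set (Set V)) : Prop :=
  ∀ A ∈ 𝒞, ∀ B ∈ 𝒞, ∀ C ∈ 𝒞,
    A ∩ B ∩ C = A ∩ B ∨ A ∩ B ∩ C = A ∩ C ∨ A ∩ B ∩ C = B ∩ C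

def AxWPSet (𝒞 : Set (Set V)) : Prop :=
  ∀ A ∈ 𝒞, ∀ B ∈ 𝒞, ∀ C ∈ 𝒞,
    (A ∩ B).Nonempty → (A ∩ C).Nonempty → (B ∩ C).Nonempty →
    A ⊆ B ∪ C ∨ B ⊆ A ∪ C ∨ C ⊆ A ∪ B

def AxISet (𝒞 : Set (Set V)) : Prop :=
  ∀ A ∈ 𝒞, ∀ B ∈ 𝒞, ∀ C ∈ 𝒞,
    (A ∩ B).Nonempty → A ∩ B ⊆ C → (C \ (A ∪ B)).Nonempty →
    A ⊆ C ∨ B ⊆ C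

def AxL1Set (𝒞 : Set (Set V)) : Prop :=
  ∀ A ∈ 𝒞, ∀ B ∈ 𝒞, ∀ C ∈ 𝒞, Ovl A B → Ovl B C →
    A ⊆ C ∨ C ⊆ A ∨ (A ∩ C ⊆ B ∧ B ⊆ A ∪ C)

def AxN3OSet (𝒞 : Set (Set V)) : Prop :=
  ∀ A ∈ 𝒞, ∀ B ∈ 𝒞, ∀ C ∈ 𝒞, Ovl A B → Ovl B C → ¬ Ovl A C

def AxL2'Set (𝒞 : Set (Set V)) : Prop :=
  ∀ A ∈ 𝒞, ∀ B ∈ 𝒞, ∀ C ∈ 𝒞, Ovl A B → Ovl B C → A ∩ C = ∅ →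
    A ∪ B ∪ C ∈ 𝒞

def AxL2''Set (𝒞 : Set (Set V)) : Prop :=
  ∀ A ∈ 𝒞, ∀ B ∈ 𝒞, ∀ C ∈ 𝒞, ∀ D ∈ 𝒞, Ovl A B → Ovl B C → A ∩ C = ∅ →
    (A ∪ C) \ B ⊆ D → A ∪ B ∪ C ⊆ D

/-!
If none of three sets contains the intersection of the other two, the sets overlap pairwise.
So being a weak hierarchy only has to be tested on chains `A ≬ B ≬ C`, and there each case of (L1)
yields one of the inclusions `A ∩ B ⊆ C`, `B ∩ C ⊆ A`, `A ∩ C ⊆ B`.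
-/

section

variable {A B C : Set V} {𝒞 : Set (Set V)}

theorem ovl_of_not_inter_subset (hAB : ¬A ∩ B ⊆ C) (hAC : ¬A ∩ C ⊆ B) (hBC : ¬B ∩ C ⊆ A) :
    Ovl A B :=
  ⟨(Set.nonempty_of_not_subset hAB).mono Set.sdiff_subset,
    Set.nonempty_of_not_subset (mt Set.inter_subset_left.trans hAC),
    Set.nonempty_of_not_subset (mt Set.inter_subset_left.trans hBC)⟩

theorem weakHierarchy_iff_inter_subset :
    WeakHierarchy 𝒞 ↔
      ∀ A ∈ 𝒞, ∀ B ∈ 𝒞, ∀ C ∈ 𝒞, A ∩ B ⊆ C ∨ A ∩ C ⊆ B ∨ B ∩ C ⊆ A := by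
  have inter_eq_iff (A B C : Set V) :
      (A ∩ B ∩ C = A ∩ B ∨ A ∩ B ∩ C = A ∩ C ∨ A ∩ B ∩ C = B ∩ C) ↔
        (A ∩ B ⊆ C ∨ A ∩ C ⊆ B ∨ B ∩ C ⊆ A) := by
    refine or_congr Set.inter_eq_left (or_congr ?_ ?_)
    · rw [Set.inter_right_comm, Set.inter_eq_left]
    · rw [Set.inter_assoc, Set.inter_eq_right]
  simp only [WeakHierarchy, inter_eq_iff]

theorem weakHierarchy_iff_inter_subset_of_ovl :
    WeakHierarchy 𝒞 ↔
      ∀ A ∈ 𝒞, ∀ B ∈ 𝒞, ∀ C ∈ 𝒞, Ovl A B → Ovl B C →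
        A ∩ B ⊆ C ∨ A ∩ C ⊆ B ∨ B ∩ C ⊆ A := by
  rw [weakHierarchy_iff_inter_subset]
  refine ⟨fun h A hA B hB C hC _ _ ↦ h A hA B hB C hC, fun h A hA B hB C hC ↦ ?_⟩
  by_contra hnot
  obtain ⟨hAB, hAC, hBC⟩ : ¬A ∩ B ⊆ C ∧ ¬A ∩ C ⊆ B ∧ ¬B ∩ C ⊆ A := by
    simpa only [not_or] using hnot
  have ovl_AB : Ovl A B := ovl_of_not_inter_subset hAB hAC hBC
  have ovl_BC : Ovl B C :=
    ovl_of_not_inter_subset hBC (Set.inter_comm A B ▸ hAB) (Set.inter_comm A C ▸ hAC)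
  exact hnot (h A hA B hB C hC ovl_AB ovl_BC)

end

theorem stmt_12_general (𝒞 : Set (Set V)) (hl1 : AxL1Set 𝒞) : WeakHierarchy 𝒞 := by
  refine weakHierarchy_iff_inter_subset_of_ovl.2 fun A hA B hB C hC hAB hBC ↦ ?_
  rcases hl1 A hA B hB C hC hAB hBC with hAC | hCA | ⟨hACB, -⟩
  · exact .inl (Set.inter_subset_left.trans hAC)
  · exact .inr (.inr (Set.inter_subset_right.trans hCA))
  · exact .inr (.inl hACB)

/-- A set system satisfying (L1) is a weak hierarchy. -/
theorem stmt_12 {V : Type*} [Fintype V] [Nonempty V] (𝒞 : Set (Set V))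
    (hne : ∀ C ∈ 𝒞, C.Nonempty) (hl1 : AxL1Set 𝒞) :
    WeakHierarchy 𝒞 :=
  stmt_12_general 𝒞 hl1

end TransitPaper
end

section
/- Let R be a monotone transit function on a finite nonempty set V satisfying axioms (l1) and (l2). Then the system of transit sets 𝒞_R is totally balanced, i.e., it contains no weak β-cycle. -/
/-!
Two members of a weak β-cycle `C₀, …, Cₙ₋₁` are never comparable by inclusion, so any two that meet
overlap. Axiom (l1), applied to `Cᵢ₊₁ ≬ Cᵢ ≬ Cⱼ` with `Cⱼ` not adjacent to `Cᵢ`, would put the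
vertex shared by `Cᵢ₋₁` and `Cᵢ` into `Cᵢ₊₁ ∪ Cⱼ`; hence non-adjacent sets are disjoint. So (l2)
makes `C₀ ∪ C₁ ∪ C₂` a member of the system, and putting it in place of the three sets shortens the
cycle by two. The descent ends at length three, where (l1) gives `C₀ ∩ C₂ ⊆ C₁`, or at length four,
where (l1) gives `C₀, C₂ ⊆ C₁ ∪ C₃`, so that the two endpoints provided by (l2) lie in `C₃` and
`C₀ ∪ C₁ ∪ C₂ ⊆ C₃`. Both inclusions put a vertex into a set that avoids it.
-/

namespace TransitPaper

variable {V : Type*}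

section TransitSets

variable {R : V → V → Set V}

theorem AxL1.axL1Set_transitSets (hl1 : AxL1 R) : AxL1Set (transitSets R) := by
  rintro _ ⟨x, y, rfl⟩ _ ⟨p, q, rfl⟩ _ ⟨u, v, rfl⟩
  exact hl1 x y p q u v

theorem AxL2.axL2'Set_transitSets (hl2 : AxL2 R) : AxL2'Set (transitSets R) := by
  rintro _ ⟨x, y, rfl⟩ _ ⟨p, q, rfl⟩ _ ⟨u, v, rfl⟩ hAB hBC hAC
  obtain ⟨s, -, t, -, hst⟩ := hl2 x y p q u v hAB hBC hAC
  exact ⟨s, t, hst⟩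

theorem AxL2.axL2''Set_transitSets (hl2 : AxL2 R) (hm : IsMonotone R) :
    AxL2''Set (transitSets R) := by
  rintro _ ⟨x, y, rfl⟩ _ ⟨p, q, rfl⟩ _ ⟨u, v, rfl⟩ _ ⟨a, b, rfl⟩ hAB hBC hAC hD
  obtain ⟨s, ⟨hsA, hsB⟩, t, ⟨htC, htB⟩, hst⟩ := hl2 x y p q u v hAB hBC hAC
  rw [hst]
  exact hm a b s t (hD ⟨.inl hsA, hsB⟩) (hD ⟨.inr htC, htB⟩)

end TransitSets

/-- A weak β-cycle of length `n` in `𝒞`, with sets and vertices indexed by the natural numbers below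
`n` so that cycles of different lengths are easy to compare; values at larger indices play no role.
The indices are shifted against `HasWeakBetaCycle`: here `C j` contains the vertices `x j` and
`x (j + 1)`, with `x 0` in place of `x n`, and no other vertex. -/
structure IsBetaCycle (𝒞 : Set (Set V)) (n : ℕ) (C : ℕ → Set V) (x : ℕ → V) : Prop where
  set_mem {j : ℕ} : j < n → C j ∈ 𝒞
  vertex_mem_iff {j k : ℕ} : j < n → k < n → (x k ∈ C j ↔ k = j ∨ k = j + 1 ∨ k = 0 ∧ j + 1 = n)

theorem zmod_natCast_eq_add_one_iff {n j k : ℕ} (hj : j < n) (hk : k < n) :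
    (k : ZMod n) = j + 1 ↔ k = j + 1 ∨ k = 0 ∧ j + 1 = n := by
  rw [← Nat.cast_succ, ZMod.natCast_eq_natCast_iff', Nat.mod_eq_of_lt hk]
  rcases Nat.lt_or_ge (j + 1) n with hlt | hge
  · rw [Nat.mod_eq_of_lt hlt]
    omega
  · obtain rfl : j + 1 = n := by omega
    rw [Nat.mod_self]
    omega

theorem HasWeakBetaCycle.exists_isBetaCycle {𝒞 : Set (Set V)} (h : HasWeakBetaCycle 𝒞) :
    ∃ n C x, IsBetaCycle 𝒞 (n + 3) C x := by
  obtain ⟨n, hn, C, x, hC, hmem, hnotMem⟩ := h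
  obtain ⟨m, rfl⟩ := Nat.exists_eq_add_of_le' hn
  have mem_iff (i k : ZMod (m + 3)) : x k ∈ C (i + 1) ↔ k = i ∨ k = i + 1 := by
    refine ⟨fun hk => ?_, ?_⟩
    · by_contra! hne
      exact hnotMem k (i + 1) hne.2.symm (fun e => hne.1 (add_right_cancel e).symm) hk
    · rintro (rfl | rfl)
      exacts [(hmem _).2, (hmem _).1]
  refine ⟨m, fun j => C (j + 1), fun k => x k, fun _ => hC _, fun {j k} hj hk => ?_⟩
  rw [mem_iff, zmod_natCast_eq_add_one_iff hj hk, ZMod.natCast_eq_natCast_iff',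
    Nat.mod_eq_of_lt hk, Nat.mod_eq_of_lt hj]

namespace IsBetaCycle

variable {𝒞 : Set (Set V)} {n i j k : ℕ} {C : ℕ → Set V} {x : ℕ → V}

theorem not_subset (h : IsBetaCycle 𝒞 n C x) (hn : 3 ≤ n) (hi : i < n) (hj : j < n)
    (hij : i ≠ j) : ¬ C i ⊆ C j := by
  intro hsub
  have vertex_mem {k : ℕ} (hk : k < n) (hki : k = i ∨ k = i + 1 ∨ k = 0 ∧ i + 1 = n) :
      k = j ∨ k = j + 1 ∨ k = 0 ∧ j + 1 = n :=
    (h.vertex_mem_iff hj hk).1 (hsub ((h.vertex_mem_iff hi hk).2 hki))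
  have first := vertex_mem hi (.inl rfl)
  rcases Nat.lt_or_ge (i + 1) n with hlt | hge
  · have second := vertex_mem hlt (by omega)
    omega
  · have second := vertex_mem (k := 0) (by omega) (by omega)
    omega

theorem ovl (h : IsBetaCycle 𝒞 n C x) (hn : 3 ≤ n) (hi : i < n) (hj : j < n) (hij : i ≠ j)
    (hne : (C i ∩ C j).Nonempty) : Ovl (C i) (C j) :=
  ⟨hne, Set.sdiff_nonempty.2 (h.not_subset hn hi hj hij),
    Set.sdiff_nonempty.2 (h.not_subset hn hj hi hij.symm)⟩

theorem inter_succ_nonempty (h : IsBetaCycle 𝒞 n C x) (hi : i + 1 < n) :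
    (C i ∩ C (i + 1)).Nonempty :=
  ⟨x (i + 1), (h.vertex_mem_iff (by omega) hi).2 (by omega), (h.vertex_mem_iff hi hi).2 (.inl rfl)⟩

theorem ovl_succ (h : IsBetaCycle 𝒞 n C x) (hn : 3 ≤ n) (hi : i + 1 < n) :
    Ovl (C i) (C (i + 1)) :=
  h.ovl hn (by omega) hi (by omega) (h.inter_succ_nonempty hi)

theorem inter_zero_last_nonempty (h : IsBetaCycle 𝒞 (n + 1) C x) : (C 0 ∩ C n).Nonempty :=
  ⟨x 0, (h.vertex_mem_iff (by omega) (by omega)).2 (.inl rfl),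
    (h.vertex_mem_iff (by omega) (by omega)).2 (by omega)⟩

theorem inter_subset_and_subset_union (h : IsBetaCycle 𝒞 n C x) (hl1 : AxL1Set 𝒞)
    (hi : i < n) (hj : j < n) (hk : k < n) (hij : i ≠ j) (hjk : j ≠ k) (hik : i ≠ k)
    (hne : (C i ∩ C j).Nonempty) (hne' : (C j ∩ C k).Nonempty) :
    C i ∩ C k ⊆ C j ∧ C j ⊆ C i ∪ C k := by
  have hn : 3 ≤ n := by omega
  exact ((hl1 _ (h.set_mem hi) _ (h.set_mem hj) _ (h.set_mem hk) (h.ovl hn hi hj hij hne)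
    (h.ovl hn hj hk hjk hne')).resolve_left (h.not_subset hn hi hk hik)).resolve_left
    (h.not_subset hn hk hi hik.symm)

theorem inter_eq_empty (h : IsBetaCycle 𝒞 n C x) (hl1 : AxL1Set 𝒞) (hij : i + 1 < j) (hj : j < n)
    (hends : ¬ (i = 0 ∧ j + 1 = n)) : C i ∩ C j = ∅ := by
  by_contra! hne
  have hsub : C i ⊆ C (i + 1) ∪ C j :=
    (h.inter_subset_and_subset_union hl1 (by omega) (by omega) hj (by omega) (by omega) (by omega)
      (Set.inter_comm _ _ ▸ h.inter_succ_nonempty (by omega)) hne).2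
  rcases hsub ((h.vertex_mem_iff (by omega) (by omega)).2 (.inl rfl) : x i ∈ C i) with hx | hx
  all_goals
    rw [h.vertex_mem_iff (by omega) (by omega)] at hx
    omega

theorem union_mem (h : IsBetaCycle 𝒞 n C x) (hn : 4 ≤ n) (hl1 : AxL1Set 𝒞) (hl2' : AxL2'Set 𝒞) :
    C 0 ∪ C 1 ∪ C 2 ∈ 𝒞 :=
  hl2' _ (h.set_mem (by omega)) _ (h.set_mem (by omega)) _ (h.set_mem (by omega))
    (h.ovl_succ (by omega) (by omega)) (h.ovl_succ (by omega) (by omega))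
    (h.inter_eq_empty hl1 (by omega) (by omega) (by omega))

theorem merge (h : IsBetaCycle 𝒞 (n + 2) C x) (hn : 0 < n) (hU : C 0 ∪ C 1 ∪ C 2 ∈ 𝒞) :
    IsBetaCycle 𝒞 n (fun j => if j = 0 then C 0 ∪ C 1 ∪ C 2 else C (j + 2))
      (fun k => if k = 0 then x 0 else x (k + 2)) where
  set_mem {j} hj := by
    split_ifs
    exacts [hU, h.set_mem (by omega)]
  vertex_mem_iff {j k} hj hk := by
    have union_iff {k : ℕ} (hk : k < n + 2) : x k ∈ C 0 ∪ C 1 ∪ C 2 ↔ k ≤ 3 := by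
      simp only [Set.mem_union]
      rw [h.vertex_mem_iff (by omega) hk, h.vertex_mem_iff (by omega) hk,
        h.vertex_mem_iff (by omega) hk]
      omega
    split_ifs
    · rw [union_iff (by omega)]
      omega
    · rw [union_iff (by omega)]
      omega
    all_goals
      rw [h.vertex_mem_iff (by omega) (by omega)]
      omega

end IsBetaCycle

section NoCycles

variable {𝒞 : Set (Set V)}

theorem not_isBetaCycle_three (hl1 : AxL1Set 𝒞) (C : ℕ → Set V) (x : ℕ → V) :
    ¬ IsBetaCycle 𝒞 3 C x := by
  intro h
  have hsub : C 0 ∩ C 2 ⊆ C 1 :=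
    (h.inter_subset_and_subset_union hl1 (by omega) (by omega) (by omega) (by omega) (by omega)
      (by omega) (h.inter_succ_nonempty (by omega)) (h.inter_succ_nonempty (by omega))).1
  have hx : x 0 ∈ C 1 := hsub
    ⟨(h.vertex_mem_iff (by omega) (by omega)).2 (by omega),
      (h.vertex_mem_iff (by omega) (by omega)).2 (by omega)⟩
  rw [h.vertex_mem_iff (by omega) (by omega)] at hx
  omega

theorem not_isBetaCycle_four (hl1 : AxL1Set 𝒞) (hl2'' : AxL2''Set 𝒞) (C : ℕ → Set V)
    (x : ℕ → V) : ¬ IsBetaCycle 𝒞 4 C x := by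
  intro h
  have hsub₀ : C 0 ⊆ C 1 ∪ C 3 :=
    (h.inter_subset_and_subset_union hl1 (by omega) (by omega) (by omega) (by omega) (by omega)
      (by omega) (Set.inter_comm _ _ ▸ h.inter_succ_nonempty (by omega))
      h.inter_zero_last_nonempty).2
  have hsub₂ : C 2 ⊆ C 1 ∪ C 3 :=
    (h.inter_subset_and_subset_union hl1 (by omega) (by omega) (by omega) (by omega) (by omega)
      (by omega) (h.inter_succ_nonempty (by omega)) (h.inter_succ_nonempty (by omega))).2
  have hU : C 0 ∪ C 1 ∪ C 2 ⊆ C 3 :=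
    hl2'' _ (h.set_mem (by omega)) _ (h.set_mem (by omega)) _ (h.set_mem (by omega))
      _ (h.set_mem (by omega)) (h.ovl_succ (by omega) (by omega))
      (h.ovl_succ (by omega) (by omega)) (h.inter_eq_empty hl1 (by omega) (by omega) (by omega))
      (Set.sdiff_subset_iff.2 (Set.union_subset hsub₀ hsub₂))
  have hx : x 1 ∈ C 3 := hU (.inl (.inl ((h.vertex_mem_iff (by omega) (by omega)).2 (by omega))))
  rw [h.vertex_mem_iff (by omega) (by omega)] at hx
  omega

theorem not_isBetaCycle (hl1 : AxL1Set 𝒞) (hl2' : AxL2'Set 𝒞) (hl2'' : AxL2''Set 𝒞) :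
    ∀ (n : ℕ) (C : ℕ → Set V) (x : ℕ → V), ¬ IsBetaCycle 𝒞 (n + 3) C x
  | 0 => not_isBetaCycle_three hl1
  | 1 => not_isBetaCycle_four hl1 hl2''
  | n + 2 => fun _ _ h => not_isBetaCycle hl1 hl2' hl2'' n _ _
      (IsBetaCycle.merge h (by omega) (h.union_mem (by omega) hl1 hl2'))

theorem stmt_17_general (hl1 : AxL1Set 𝒞) (hl2' : AxL2'Set 𝒞) (hl2'' : AxL2''Set 𝒞) :
    TotallyBalanced 𝒞 := by
  intro hcycle
  obtain ⟨n, C, x, h⟩ := hcycle.exists_isBetaCycle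
  exact not_isBetaCycle hl1 hl2' hl2'' n C x h

end NoCycles

/-- If a monotone transit function satisfies (l1) and (l2), then
𝒞_R is totally balanced. -/
theorem stmt_17 {V : Type*} [Fintype V] [Nonempty V] (R : V → V → Set V)
    (htf : IsTransit R) (hm : IsMonotone R) (hl1 : AxL1 R) (hl2 : AxL2 R) :
    TotallyBalanced (transitSets R) :=
  stmt_17_general hl1.axL1Set_transitSets hl2.axL2'Set_transitSets
    (hl2.axL2''Set_transitSets hm)

end TransitPaper
end
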